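/- arXiv:1207.0879 — 8 statements merged into one kernel-verified Lean document; each statement's English description precedes it below -/
import Mathlib

section
/- Under the exact cooperative repair setup, for any subset I ⊆ R with |I| = a and any subset J ⊆ ⋂_{i∈I} H_i with |J| = b, the dimensions satisfy dim(Σ_{i∈I} W_i) − dim((Σ_{i∈I} W_i) ∩ (Σ_{j∈J} W_j)) ≤ a·((d−b)·β₁ + (r−a)·β₂). -/
open Module Submodule Finset

/-!
Let `U` be the sum over `i ∈ I` of what node `i` downloads from helpers outside `J` and from failed
nodes outside `I`. A download from a helper in `J` already lies in `∑ j ∈ J, W j`, and what `i`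
receives from another node `i' ∈ I` is a combination of the helper downloads of `i'`. Hence
`∑ i ∈ I, W i ≤ U + ∑ j ∈ J, W j`, and modulo `∑ j ∈ J, W j` the left side has dimension at most
that of `U`, which is bounded by counting.
-/

section SubmoduleSum

variable {ι K V : Type*}

theorem submodule_sum_le [Semiring K] [AddCommMonoid V] [Module K V] {s : Finset ι}
    {p : ι → Submodule K V} {q : Submodule K V} (h : ∀ i ∈ s, p i ≤ q) : ∑ i ∈ s, p i ≤ q :=
  Finset.sum_induction p (· ≤ q) (fun _ _ => sup_le) bot_le h

variable [DivisionRing K] [AddCommGroup V] [Module K V]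

theorem finrank_sum_le_card_mul [FiniteDimensional K V] {s : Finset ι}
    {p : ι → Submodule K V} {c : ℕ} (h : ∀ i ∈ s, finrank K (p i) ≤ c) :
    finrank K (∑ i ∈ s, p i : Submodule K V) ≤ #s * c :=
  calc finrank K (∑ i ∈ s, p i : Submodule K V)
      ≤ ∑ i ∈ s, finrank K (p i) :=
        Finset.le_sum_of_subadditive (fun q : Submodule K V => finrank K q) (finrank_bot K V).le
          (fun q u => finrank_add_le_finrank_add_finrank q u) s p
    _ ≤ #s * c := Finset.sum_le_card_nsmul s _ c h

theorem finrank_sub_finrank_inf_le_of_le_sup {p q u : Submodule K V} [FiniteDimensional K p]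
    [FiniteDimensional K q] [FiniteDimensional K u] (h : p ≤ q ⊔ u) :
    finrank K p - finrank K (p ⊓ u : Submodule K V) ≤ finrank K q := by
  have modular := finrank_sup_add_finrank_inf_eq p u
  have sup_le_sum : finrank K (p ⊔ u : Submodule K V) ≤ finrank K q + finrank K u :=
    (finrank_mono (sup_le h le_sup_right)).trans (finrank_add_le_finrank_add_finrank q u)
  lia

end SubmoduleSum

section ResidualDownload

variable {ι K V : Type*} [DecidableEq ι]

/-- The part of the data received by the failed node `i` that comes from helpers outside `J` and
from failed nodes outside `I`, where `S j i` is sent to `i` by the helper `j`, and `T i' i` by the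
failed node `i'`. -/
def residualDownload [Semiring K] [AddCommMonoid V] [Module K V] (S T : ι → ι → Submodule K V)
    (H : ι → Finset ι) (R I J : Finset ι) (i : ι) : Submodule K V :=
  ∑ j ∈ H i \ J, S j i + ∑ i' ∈ R \ I, T i' i

section Containment

variable [Semiring K] [AddCommMonoid V] [Module K V] {W : ι → Submodule K V}
  {S T : ι → ι → Submodule K V} {H : ι → Finset ι} {R I J : Finset ι}

theorem sum_helper_le_residualDownload_add {i : ι} (hS : ∀ j ∈ J, S j i ≤ W j) :
    ∑ j ∈ H i, S j i ≤ residualDownload S T H R I J i + ∑ j ∈ J, W j := by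
  refine submodule_sum_le fun j hj => ?_
  by_cases hjJ : j ∈ J
  · exact (hS j hjJ).trans <| (single_le_sum_of_canonicallyOrdered hjJ).trans le_add_self
  · have residual : S j i ≤ ∑ j ∈ H i \ J, S j i :=
      single_le_sum_of_canonicallyOrdered (f := fun j => S j i) (mem_sdiff.2 ⟨hj, hjJ⟩)
    exact residual.trans <| le_self_add.trans le_self_add

theorem sum_node_le_sum_residualDownload_add (hS : ∀ i ∈ I, ∀ j ∈ J, S j i ≤ W j)
    (hT : ∀ i ∈ I, ∀ i' ∈ I, i' ≠ i → T i' i ≤ ∑ j ∈ H i', S j i')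
    (hW : ∀ i ∈ I, W i ≤ ∑ j ∈ H i, S j i + ∑ i' ∈ R.erase i, T i' i) :
    ∑ i ∈ I, W i ≤ ∑ i ∈ I, residualDownload S T H R I J i + ∑ j ∈ J, W j := by
  set U := ∑ i ∈ I, residualDownload S T H R I J i
  have residual_le : ∀ i ∈ I, residualDownload S T H R I J i ≤ U := fun i hi =>
    single_le_sum_of_canonicallyOrdered hi
  have helper_le : ∀ i ∈ I, ∑ j ∈ H i, S j i ≤ U + ∑ j ∈ J, W j := fun i hi =>
    (sum_helper_le_residualDownload_add (hS i hi)).trans (add_le_add_left (residual_le i hi) _)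
  refine submodule_sum_le fun i hi => (hW i hi).trans ?_
  refine sup_le (helper_le i hi) (submodule_sum_le fun i' hi' => ?_)
  obtain ⟨hne, hi'R⟩ := mem_erase.1 hi'
  by_cases hi'I : i' ∈ I
  · exact (hT i hi i' hi'I hne).trans (helper_le i' hi'I)
  · have residual : T i' i ≤ ∑ i' ∈ R \ I, T i' i :=
      single_le_sum_of_canonicallyOrdered (f := fun i' => T i' i) (mem_sdiff.2 ⟨hi'R, hi'I⟩)
    exact residual.trans <| le_add_self.trans <| (residual_le i hi).trans le_self_add

end Containment

section Dimension

variable [DivisionRing K] [AddCommGroup V] [Module K V] [FiniteDimensional K V]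
  {W : ι → Submodule K V} {S T : ι → ι → Submodule K V} {H : ι → Finset ι} {R I J : Finset ι}
  {d β₁ β₂ : ℕ}

theorem finrank_residualDownload_le {i : ι} (hI : I ⊆ R) (hJ : J ⊆ H i) (hH : #(H i) ≤ d)
    (hS : ∀ j ∈ H i \ J, finrank K (S j i) ≤ β₁) (hT : ∀ i' ∈ R \ I, finrank K (T i' i) ≤ β₂) :
    finrank K (residualDownload S T H R I J i) ≤ (d - #J) * β₁ + (#R - #I) * β₂ :=
  calc finrank K (residualDownload S T H R I J i)
      ≤ #(H i \ J) * β₁ + #(R \ I) * β₂ :=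
        (finrank_add_le_finrank_add_finrank _ _).trans <|
          add_le_add (finrank_sum_le_card_mul hS) (finrank_sum_le_card_mul hT)
    _ = (#(H i) - #J) * β₁ + (#R - #I) * β₂ := by
        rw [card_sdiff_of_subset hJ, card_sdiff_of_subset hI]
    _ ≤ (d - #J) * β₁ + (#R - #I) * β₂ := by gcongr

theorem mbcr_dimension_bound_general
    (hH : ∀ i ∈ R, #(H i) ≤ d)
    (hSdim : ∀ i ∈ R, ∀ j ∈ H i, finrank K (S j i) ≤ β₁)
    (hSsub : ∀ i ∈ R, ∀ j ∈ H i, S j i ≤ W j)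
    (hTdim : ∀ i ∈ R, ∀ i' ∈ R, i' ≠ i → finrank K (T i' i) ≤ β₂)
    (hTsub : ∀ i ∈ R, ∀ i' ∈ R, i' ≠ i → T i' i ≤ ∑ j ∈ H i', S j i')
    (hrepair : ∀ i ∈ R, W i ≤ ∑ j ∈ H i, S j i + ∑ i' ∈ R.erase i, T i' i)
    (hI : I ⊆ R) (hJ : ∀ i ∈ I, J ⊆ H i) :
    finrank K (∑ i ∈ I, W i : Submodule K V) -
        finrank K ((∑ i ∈ I, W i) ⊓ ∑ j ∈ J, W j : Submodule K V) ≤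
      #I * ((d - #J) * β₁ + (#R - #I) * β₂) := by
  have nodes_le : ∑ i ∈ I, W i ≤ ∑ i ∈ I, residualDownload S T H R I J i + ∑ j ∈ J, W j :=
    sum_node_le_sum_residualDownload_add (fun i hi j hj => hSsub i (hI hi) j (hJ i hi hj))
      (fun i hi i' hi' => hTsub i (hI hi) i' (hI hi')) (fun i hi => hrepair i (hI hi))
  have residual_dim : ∀ i ∈ I, finrank K (residualDownload S T H R I J i) ≤
      (d - #J) * β₁ + (#R - #I) * β₂ := fun i hi =>
    finrank_residualDownload_le hI (hJ i hi) (hH i (hI hi))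
      (fun j hj => hSdim i (hI hi) j (mem_sdiff.1 hj).1)
      (fun i' hi' => hTdim i (hI hi) i' (mem_sdiff.1 hi').1
        (ne_of_mem_of_not_mem hi (mem_sdiff.1 hi').2).symm)
  exact (finrank_sub_finrank_inf_le_of_le_sup nodes_le).trans (finrank_sum_le_card_mul residual_dim)

end Dimension

end ResidualDownload

/-- Lemma 1 of the paper: under the exact cooperative repair setup, for any `I ⊆ R` with
`|I| = a` and `J ⊆ ⋂_{i ∈ I} H i` with `|J| = b`,
`dim (Σ_{i∈I} W i) - dim ((Σ_{i∈I} W i) ⊓ (Σ_{j∈J} W j)) ≤ a((d-b)β₁ + (r-a)β₂)`. -/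
theorem mbcr_dimension_bound {B : ℕ} {F : Type*} [Field F] [Fintype F]
    (n d r β₁ β₂ : ℕ) (hn : 0 < n) (hd : 0 < d) (hr : 0 < r) (hβ₁ : 0 < β₁) (hβ₂ : 0 < β₂)
    (W : Fin n → Submodule F (Fin B → F))
    (R : Finset (Fin n)) (hRcard : R.card = r)
    (H : Fin n → Finset (Fin n))
    (hHcard : ∀ i ∈ R, (H i).card = d)
    (hHdisj : ∀ i ∈ R, ∀ j ∈ H i, j ∉ R)
    (S : Fin n → Fin n → Submodule F (Fin B → F))
    (T : Fin n → Fin n → Submodule F (Fin B → F))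
    (hSdim : ∀ i ∈ R, ∀ j ∈ H i, finrank F (S j i) ≤ β₁)
    (hSsub : ∀ i ∈ R, ∀ j ∈ H i, S j i ≤ W j)
    (hTdim : ∀ i ∈ R, ∀ i' ∈ R, i' ≠ i → finrank F (T i' i) ≤ β₂)
    (hTsub : ∀ i ∈ R, ∀ i' ∈ R, i' ≠ i → T i' i ≤ ∑ j ∈ H i', S j i')
    (hrepair : ∀ i ∈ R, W i ≤ (∑ j ∈ H i, S j i) + ∑ i' ∈ R.erase i, T i' i)
    (I : Finset (Fin n)) (hI : I ⊆ R) (a : ℕ) (ha : I.card = a)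
    (J : Finset (Fin n)) (hJ : ∀ i ∈ I, J ⊆ H i) (b : ℕ) (hb : J.card = b) :
    finrank F (∑ i ∈ I, W i : Submodule F (Fin B → F)) -
      finrank F ((∑ i ∈ I, W i) ⊓ (∑ j ∈ J, W j) : Submodule F (Fin B → F)) ≤
      a * ((d - b) * β₁ + (r - a) * β₂) := by
  subst ha hb hRcard
  exact mbcr_dimension_bound_general (fun i hi => (hHcard i hi).le) hSdim hSsub hTdim hTsub hrepair
    hI hJ
end

section
/- Under the exact cooperative repair setup, for any subset I ⊆ R and any subset J ⊆ ⋂_{i∈I} H_i, one has the containment of subspaces Σ_{i∈I} W_i ⊆ Σ_{j∈J} W_j + Σ_{i∈I} ( Σ_{j ∈ H_i \ J} S_{j,i} + Σ_{i′ ∈ R \ I} T_{i′,i} ). -/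
open Module Submodule Finset

/-!
Let `D i` be everything node `i` downloads from its helpers. Repairing `i ∈ I` uses `D i` and the
exchanged spaces `T i' i`. An exchange with `i' ∈ I` contributes nothing new, because it lies in
`D i'`; hence `∑ i ∈ I, W i` lies in the sum of the `D i` with `i ∈ I` and of the exchanges coming
from `R \ I`. Finally, the part of `D i` sent by helpers in `J` is already contained in
`∑ j ∈ J, W j`.
-/

section Lattice

variable {ι α : Type*} [DecidableEq ι] [SemilatticeSup α] [OrderBot α]

theorem finset_sup_le_sup_sup_sup_sdiff {s t : Finset ι} {f g : ι → α}
    (hfg : ∀ i ∈ s ∩ t, f i ≤ g i) : s.sup f ≤ t.sup g ⊔ (s \ t).sup f :=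
  calc s.sup f = (s ∩ t).sup f ⊔ (s \ t).sup f := by
        rw [← Finset.sup_union, union_comm, sdiff_union_inter]
    _ ≤ t.sup g ⊔ (s \ t).sup f := by
        gcongr
        exact (sup_mono_fun hfg).trans (Finset.sup_mono inter_subset_right)

variable {W D : ι → α} {S T : ι → ι → α} {H : ι → Finset ι} {R I J : Finset ι}

theorem sup_le_sup_downloads_sup_exchanges
    (hT : ∀ i ∈ I, ∀ i' ∈ I, i' ≠ i → T i' i ≤ D i')
    (hrepair : ∀ i ∈ I, W i ≤ D i ⊔ (R.erase i).sup fun i' => T i' i) :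
    I.sup W ≤ I.sup D ⊔ I.sup fun i => (R \ I).sup fun i' => T i' i := by
  refine Finset.sup_le fun i hi => ?_
  have exchanges_le : (R.erase i).sup (fun i' => T i' i) ≤
      I.sup D ⊔ (R.erase i \ I).sup fun i' => T i' i :=
    finset_sup_le_sup_sup_sup_sdiff fun i' hi' =>
      hT i hi i' (mem_of_mem_inter_right hi') (ne_of_mem_erase (mem_of_mem_inter_left hi'))
  calc W i ≤ D i ⊔ (R.erase i).sup fun i' => T i' i := hrepair i hi
    _ ≤ I.sup D ⊔ (R.erase i \ I).sup fun i' => T i' i :=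
        sup_le (le_sup_of_le_left (le_sup hi)) exchanges_le
    _ ≤ I.sup D ⊔ (R \ I).sup fun i' => T i' i := by
        gcongr
        exact erase_subset i R
    _ ≤ I.sup D ⊔ I.sup fun i => (R \ I).sup fun i' => T i' i := by
        gcongr
        exact le_sup (f := fun i => (R \ I).sup fun i' => T i' i) hi

theorem sup_downloads_le_sup_sup_sup_sdiff
    (hS : ∀ i ∈ I, ∀ j ∈ H i ∩ J, S j i ≤ W j) :
    (I.sup fun i => (H i).sup fun j => S j i) ≤
      J.sup W ⊔ I.sup fun i => (H i \ J).sup fun j => S j i :=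
  Finset.sup_le fun i hi => (finset_sup_le_sup_sup_sup_sdiff (hS i hi)).trans <|
    sup_le_sup_left (le_sup (f := fun i => (H i \ J).sup fun j => S j i) hi) _

theorem mbcr_repair_containment_general
    (hS : ∀ i ∈ I, ∀ j ∈ H i ∩ J, S j i ≤ W j)
    (hT : ∀ i ∈ I, ∀ i' ∈ I, i' ≠ i → T i' i ≤ (H i').sup fun j => S j i')
    (hrepair : ∀ i ∈ I, W i ≤
      ((H i).sup fun j => S j i) ⊔ (R.erase i).sup fun i' => T i' i) :
    I.sup W ≤ J.sup W ⊔ I.sup fun i =>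
      ((H i \ J).sup fun j => S j i) ⊔ (R \ I).sup fun i' => T i' i :=
  calc I.sup W
      ≤ (I.sup fun i => (H i).sup fun j => S j i) ⊔
          I.sup fun i => (R \ I).sup fun i' => T i' i :=
        sup_le_sup_downloads_sup_exchanges hT hrepair
    _ ≤ (J.sup W ⊔ I.sup fun i => (H i \ J).sup fun j => S j i) ⊔
          I.sup fun i => (R \ I).sup fun i' => T i' i := by
        gcongr
        exact sup_downloads_le_sup_sup_sup_sdiff hS
    _ = J.sup W ⊔ I.sup fun i =>
          ((H i \ J).sup fun j => S j i) ⊔ (R \ I).sup fun i' => T i' i := by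
        rw [sup_assoc, ← Finset.sup_sup]
        rfl

end Lattice

theorem submodule_sum_eq_sup {ι A M : Type*} [Semiring A] [AddCommMonoid M] [Module A M]
    (s : Finset ι) (N : ι → Submodule A M) : ∑ i ∈ s, N i = s.sup N :=
  rfl

/-- The key containment in the proof of Lemma 1: under the exact cooperative repair setup,
for `I ⊆ R` and `J ⊆ ⋂_{i ∈ I} H i`,
`Σ_{i∈I} W i ⊆ Σ_{j∈J} W j + Σ_{i∈I} (Σ_{j ∈ H i \ J} S j i + Σ_{i' ∈ R \ I} T i' i)`. -/
theorem mbcr_repair_containment {B : ℕ} {F : Type*} [Field F] [Fintype F]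
    (n d r β₁ β₂ : ℕ) (hn : 0 < n) (hd : 0 < d) (hr : 0 < r) (hβ₁ : 0 < β₁) (hβ₂ : 0 < β₂)
    (W : Fin n → Submodule F (Fin B → F))
    (R : Finset (Fin n)) (hRcard : R.card = r)
    (H : Fin n → Finset (Fin n))
    (hHcard : ∀ i ∈ R, (H i).card = d)
    (hHdisj : ∀ i ∈ R, ∀ j ∈ H i, j ∉ R)
    (S : Fin n → Fin n → Submodule F (Fin B → F))
    (T : Fin n → Fin n → Submodule F (Fin B → F))
    (hSdim : ∀ i ∈ R, ∀ j ∈ H i, finrank F (S j i) ≤ β₁)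
    (hSsub : ∀ i ∈ R, ∀ j ∈ H i, S j i ≤ W j)
    (hTdim : ∀ i ∈ R, ∀ i' ∈ R, i' ≠ i → finrank F (T i' i) ≤ β₂)
    (hTsub : ∀ i ∈ R, ∀ i' ∈ R, i' ≠ i → T i' i ≤ ∑ j ∈ H i', S j i')
    (hrepair : ∀ i ∈ R, W i ≤ (∑ j ∈ H i, S j i) + ∑ i' ∈ R.erase i, T i' i)
    (I : Finset (Fin n)) (hI : I ⊆ R)
    (J : Finset (Fin n)) (hJ : ∀ i ∈ I, J ⊆ H i) :
    (∑ i ∈ I, W i) ≤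
      (∑ j ∈ J, W j) +
        ∑ i ∈ I, ((∑ j ∈ (H i) \ J, S j i) + ∑ i' ∈ R \ I, T i' i) := by
  simp only [submodule_sum_eq_sup, Submodule.add_eq_sup] at hTsub hrepair ⊢
  exact mbcr_repair_containment_general
    (fun i hi j hj => hSsub i (hI hi) j (mem_of_mem_inter_left hj))
    (fun i hi i' hi' => hTsub i (hI hi) i' (hI hi'))
    (fun i hi => hrepair i (hI hi))
end

section
/- Suppose W_1, …, W_k are subspaces of 𝔽_q^B such that dim W_i ≤ α for every i, W_1 + ⋯ + W_k = 𝔽_q^B, and for each 2 ≤ i ≤ k one has dim W_i − dim( W_i ∩ (W_1 + ⋯ + W_{i−1}) ) ≤ (d−i+1)·β₁ + (r−1)·β₂. If in addition dim W_2 = α, then dim( W_1 ∩ W_2 ) = β₁. -/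
open Module Submodule Finset

/-!
Adding `W i` to `W 1 + ⋯ + W (i - 1)` raises the dimension by `dim W i - dim (W i ∩ ∑_{j < i} W j)`,
so these increments sum to `dim (W 1 + ⋯ + W k)`. The `i`-th one is at most
`(d - i + 1) β₁ + (r - 1) β₂`; for `i = 1` this is the bound `dim W 1 ≤ α`. Since `β₁ = 2 β₂`, the
bounds sum to `k (2 d + r - k) β₂`, the dimension to be reached, so every increment attains
its bound. If `dim W m = α`, the `m`-th intersection then has dimension
`α - ((d - m + 1) β₁ + (r - 1) β₂) = (m - 1) β₁`.
-/

section FinrankIncrement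

variable {F V : Type*} [DivisionRing F] [AddCommGroup V] [Module F V]

/-- The dimension contributed by the `i`-th term of a sum of subspaces `W 1 + W 2 + ⋯`, encoded as
`dim W i - dim (W i ∩ (W 1 + ⋯ + W (i - 1)))`. In finite dimension the subtraction of natural
numbers does not truncate. -/
noncomputable def finrankIncrement (W : ℕ → Submodule F V) (i : ℕ) : ℕ :=
  finrank F (W i) - finrank F (W i ⊓ ∑ j ∈ Icc 1 (i - 1), W j : Submodule F V)

lemma finrankIncrement_one (W : ℕ → Submodule F V) : finrankIncrement W 1 = finrank F (W 1) := by
  rw [finrankIncrement, Nat.sub_self, Icc_eq_empty_of_lt one_pos, sum_empty, Submodule.zero_eq_bot,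
    inf_bot_eq, finrank_bot, Nat.sub_zero]

variable [FiniteDimensional F V]

lemma finrankIncrement_add_finrank_inf (W : ℕ → Submodule F V) (i : ℕ) :
    finrankIncrement W i + finrank F (W i ⊓ ∑ j ∈ Icc 1 (i - 1), W j : Submodule F V) =
      finrank F (W i) :=
  Nat.sub_add_cancel (finrank_mono inf_le_left)

lemma finrank_sum_Icc_succ (W : ℕ → Submodule F V) (n : ℕ) :
    finrank F (∑ i ∈ Icc 1 (n + 1), W i : Submodule F V) =
      finrank F (∑ i ∈ Icc 1 n, W i : Submodule F V) + finrankIncrement W (n + 1) := by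
  have hincr := finrankIncrement_add_finrank_inf W (n + 1)
  have hsup := finrank_sup_add_finrank_inf_eq (W (n + 1)) (∑ i ∈ Icc 1 n, W i)
  rw [Nat.add_sub_cancel] at hincr
  rw [sum_Icc_succ_top (Nat.le_add_left 1 n), Submodule.add_eq_sup, sup_comm]
  lia

lemma finrank_sum_Icc_eq_sum_finrankIncrement (W : ℕ → Submodule F V) (n : ℕ) :
    finrank F (∑ i ∈ Icc 1 n, W i : Submodule F V) = ∑ i ∈ Icc 1 n, finrankIncrement W i := by
  induction n with
  | zero => simp
  | succ n ih => rw [finrank_sum_Icc_succ, ih, sum_Icc_succ_top (Nat.le_add_left 1 n)]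

lemma finrankIncrement_eq_of_sum_le {W : ℕ → Submodule F V} {c : ℕ → ℕ} {n m : ℕ}
    (hle : ∀ i ∈ Icc 1 n, finrankIncrement W i ≤ c i)
    (hsum : ∑ i ∈ Icc 1 n, c i ≤ finrank F (∑ i ∈ Icc 1 n, W i : Submodule F V))
    (hm : m ∈ Icc 1 n) : finrankIncrement W m = c m := by
  rw [finrank_sum_Icc_eq_sum_finrankIncrement] at hsum
  exact (sum_eq_sum_iff_of_le hle).1 ((sum_le_sum hle).antisymm hsum) m hm

end FinrankIncrement

lemma sum_mbcr_increment_bounds {k d r : ℕ} (β : ℕ) (hr : 0 < r) (hkd : k ≤ d) :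
    ∑ i ∈ Icc 1 k, ((d - i + 1) * (2 * β) + (r - 1) * β) = k * (2 * d + r - k) * β := by
  induction k with
  | zero => simp
  | succ k ih =>
    rw [sum_Icc_succ_top (Nat.le_add_left 1 k), ih (Nat.le_of_succ_le hkd)]
    obtain ⟨e, rfl⟩ := Nat.exists_eq_add_of_le hkd
    obtain ⟨s, rfl⟩ := Nat.exists_eq_add_of_le' hr
    rw [show 2 * (k + 1 + e) + (s + 1) - k = k + 2 * e + s + 3 by lia,
      show 2 * (k + 1 + e) + (s + 1) - (k + 1) = k + 2 * e + s + 2 by lia,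
      Nat.add_sub_cancel_left, Nat.add_sub_cancel]
    ring

theorem mbcr_pairwise_intersection_general {F V : Type*} [DivisionRing F] [AddCommGroup V]
    [Module F V] [FiniteDimensional F V] {k d r β₁ β₂ α m : ℕ} (hr : 0 < r) (hkd : k ≤ d)
    (hβ₁ : β₁ = 2 * β₂) (hα : α = d * β₁ + (r - 1) * β₂) (W : ℕ → Submodule F V)
    (hW1 : finrank F (W 1) ≤ α)
    (hsum : k * (2 * d + r - k) * β₂ ≤ finrank F (∑ i ∈ Icc 1 k, W i : Submodule F V))
    (hstep : ∀ i, 2 ≤ i → i ≤ k →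
      finrank F (W i) - finrank F (W i ⊓ ∑ j ∈ Icc 1 (i - 1), W j : Submodule F V) ≤
        (d - i + 1) * β₁ + (r - 1) * β₂)
    (hm : m ∈ Icc 1 k) (hWm : finrank F (W m) = α) :
    finrank F (W m ⊓ ∑ j ∈ Icc 1 (m - 1), W j : Submodule F V) = (m - 1) * β₁ := by
  obtain ⟨hm1, hmk⟩ := mem_Icc.1 hm
  have hle : ∀ i ∈ Icc 1 k, finrankIncrement W i ≤ (d - i + 1) * β₁ + (r - 1) * β₂ := by
    intro i hi
    obtain ⟨hi1, hik⟩ := mem_Icc.1 hi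
    obtain rfl | hi2 := hi1.eq_or_lt
    · rwa [finrankIncrement_one, Nat.sub_add_cancel (hik.trans hkd), ← hα]
    · exact hstep i hi2 hik
  rw [← sum_mbcr_increment_bounds β₂ hr hkd, ← hβ₁] at hsum
  have hincr := finrankIncrement_eq_of_sum_le hle hsum hm
  have hsplit : d * β₁ = (m - 1) * β₁ + (d - m + 1) * β₁ := by
    rw [← add_mul, show m - 1 + (d - m + 1) = d by lia]
  have hdim := finrankIncrement_add_finrank_inf W m
  lia

/-- From the proof of Property 1: with MBCR parameters (`k ≥ 2`), if `dim W i ≤ α` for all `i`,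
`W 1 + ⋯ + W k = 𝔽_q^B`, the Lemma-1 dimension bounds hold, and `dim W 2 = α`,
then `dim (W 1 ⊓ W 2) = β₁`. -/
theorem mbcr_pairwise_intersection {B : ℕ} {F : Type*} [Field F] [Fintype F]
    (k d r β₁ β₂ α : ℕ) (hk : 0 < k) (hd : 0 < d) (hr : 0 < r) (hβ₂ : 0 < β₂)
    (hkd : k ≤ d) (hk2 : 2 ≤ k) (hβ₁ : β₁ = 2 * β₂) (hα : α = d * β₁ + (r - 1) * β₂)
    (hB : B = k * (2 * d + r - k) * β₂)
    (W : ℕ → Submodule F (Fin B → F))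
    (hdim : ∀ i ∈ Finset.Icc 1 k, finrank F (W i) ≤ α)
    (hspan : (∑ i ∈ Finset.Icc 1 k, W i) = (⊤ : Submodule F (Fin B → F)))
    (hstep : ∀ i, 2 ≤ i → i ≤ k →
      finrank F (W i) -
        finrank F (W i ⊓ ∑ j ∈ Finset.Icc 1 (i - 1), W j : Submodule F (Fin B → F)) ≤
        (d - i + 1) * β₁ + (r - 1) * β₂)
    (hW2 : finrank F (W 2) = α) :
    finrank F (W 1 ⊓ W 2 : Submodule F (Fin B → F)) = β₁ := by
  have hB_le : k * (2 * d + r - k) * β₂ ≤ finrank F (∑ i ∈ Icc 1 k, W i : Submodule F _) := by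
    rw [hspan, finrank_top, finrank_fin_fun, hB]
  have hinf := mbcr_pairwise_intersection_general hr hkd hβ₁ hα W
    (hdim 1 (mem_Icc.2 ⟨le_rfl, hk⟩)) hB_le hstep (mem_Icc.2 ⟨one_le_two, hk2⟩) hW2
  rwa [show 2 - 1 = 1 from rfl, Icc_self, sum_singleton, one_mul, inf_comm] at hinf
end

section
/- Let W and W′ be subspaces of 𝔽_q^B with dim( W ∩ W′ ) = β₁. Suppose W decomposes as a direct sum W = U ⊕ T′, where T′ ⊆ W′ and dim T′ = β₂, and suppose T is a subspace with T ⊆ U, T ⊆ W′, and dim T = β₂. Then T ∩ T′ = {0} and T ⊕ T′ = W ∩ W′. -/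
open Module Submodule

section VectorSpace

variable {K V : Type*} [DivisionRing K] [AddCommGroup V] [Module K V]

theorem sup_eq_of_disjoint_of_finrank_le_add {S T P : Submodule K V} [FiniteDimensional K P]
    (hSP : S ≤ P) (hTP : T ≤ P) (hST : Disjoint S T)
    (hdim : finrank K P ≤ finrank K S + finrank K T) : S ⊔ T = P := by
  have : FiniteDimensional K S := finiteDimensional_of_le hSP
  have : FiniteDimensional K T := finiteDimensional_of_le hTP
  have finrank_sup : finrank K ↥(S ⊔ T) = finrank K S + finrank K T := by
    rw [← finrank_sup_add_finrank_inf_eq, hST.eq_bot, finrank_bot, add_zero]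
  exact eq_of_le_of_finrank_le (sup_le hSP hTP) (hdim.trans_eq finrank_sup.symm)

theorem mbcr_exchange_direct_sum_general {W W' U T T' : Submodule K V}
    [FiniteDimensional K ↥(W ⊓ W')] (hdecomp : U ⊔ T' ≤ W) (hdisj : Disjoint U T')
    (hT'W' : T' ≤ W') (hTU : T ≤ U) (hTW' : T ≤ W')
    (hdim : finrank K ↥(W ⊓ W') ≤ finrank K T + finrank K T') :
    Disjoint T T' ∧ T ⊔ T' = W ⊓ W' := by
  obtain ⟨hUW, hT'W⟩ := sup_le_iff.mp hdecomp
  have hTT' : Disjoint T T' := hdisj.mono_left hTU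
  exact ⟨hTT', sup_eq_of_disjoint_of_finrank_le_add
    (le_inf (hTU.trans hUW) hTW') (le_inf hT'W hT'W') hTT' hdim⟩

end VectorSpace

/-- Property 3 of the paper (second part): with `β₁ = 2 β₂` and `dim (W ⊓ W') = β₁`,
if `W = U ⊕ T'` with `T' ⊆ W'`, `dim T' = β₂`, and `T ⊆ U`, `T ⊆ W'`, `dim T = β₂`,
then `T ∩ T' = {0}` and `T ⊕ T' = W ∩ W'`. -/
theorem mbcr_exchange_direct_sum {B : ℕ} {F : Type*} [Field F] [Fintype F]
    (β₁ β₂ : ℕ) (hβ₂ : 0 < β₂) (hβ₁ : β₁ = 2 * β₂)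
    (W W' U T T' : Submodule F (Fin B → F))
    (hWW' : finrank F (W ⊓ W' : Submodule F (Fin B → F)) = β₁)
    (hdecomp : W = U ⊔ T') (hdisj : U ⊓ T' = ⊥)
    (hT'W' : T' ≤ W') (hT'dim : finrank F T' = β₂)
    (hTU : T ≤ U) (hTW' : T ≤ W') (hTdim : finrank F T = β₂) :
    T ⊓ T' = ⊥ ∧ T ⊔ T' = W ⊓ W' :=
  (mbcr_exchange_direct_sum_general hdecomp.ge (disjoint_iff.mpr hdisj) hT'W' hTU hTW'
    (by omega)).imp_left Disjoint.eq_bot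
end

section
/- Let n, d, r, β₂ be positive integers with r ≥ 2, d ≥ 2, and n ≥ d + r, and set β₁ = 2·β₂ and α = d·β₁ + (r−1)·β₂. Then there do NOT exist: subspaces W_1, …, W_n of 𝔽_q^B, a linearly independent family g_1, …, g_α of vectors spanning W_1, and subsets G_i ⊆ {g_1, …, g_α} for 2 ≤ i ≤ n, such that for every 2 ≤ i ≤ n the span of G_i equals W_1 ∩ W_i with dim( W_1 ∩ W_i ) = β₁, and for all distinct 2 ≤ i, j ≤ n one has ( W_1 ∩ W_i ) ∩ ( W_1 ∩ W_j ) = {0}. (This is the combinatorial core of the theorem that no nontrivial linear exact MBCR code achieves repair-by-transfer: repair-by-transfer forces each transferred subspace W_1 ∩ W_i to be spanned by a subset G_i of the fixed stored basis of W_1, while the derived subspace properties force the intersections and disjointness above.) -/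
open Module Submodule

/-!
The subspaces `W i₀ ⊓ W i` meet trivially, so the sets of basis packets spanning them are disjoint.
Node `i₀` therefore stores at least `(n - 1) β₁ ≥ d β₁ + (r - 1) β₁` packets, whereas the MBCR
parameters leave it only `α = d β₁ + (r - 1) β₂` with `β₂ < β₁`.
-/

section SpanOfSubfamilies

variable {R V ι κ : Type*} [Semiring R] [AddCommMonoid V] [Module R V] {g : κ → V}

theorem disjoint_of_disjoint_span_image (hg : ∀ k, g k ≠ 0) {s t : Set κ}
    (h : Disjoint (span R (g '' s)) (span R (g '' t))) : Disjoint s t :=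
  Set.disjoint_left.mpr fun k hks hkt =>
    hg k <| disjoint_def.mp h (g k) (subset_span ⟨k, hks, rfl⟩) (subset_span ⟨k, hkt, rfl⟩)

variable [Nontrivial R] [StrongRankCondition R]

theorem finrank_span_image_eq_card {s : Finset κ} (hg : LinearIndepOn R g (s : Set κ)) :
    finrank R (span R (g '' s)) = s.card := by
  rw [Set.image_eq_range]
  exact (finrank_span_eq_card hg).trans (Fintype.card_coe s)

theorem sum_finrank_span_image_le_card [Fintype κ] (hg : LinearIndependent R g)
    {s : Finset ι} {G : ι → Finset κ}
    (hG : (s : Set ι).PairwiseDisjoint fun i => span R (g '' G i)) :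
    ∑ i ∈ s, finrank R (span R (g '' G i)) ≤ Fintype.card κ := by
  classical
  have hG' : (s : Set ι).PairwiseDisjoint G := fun i hi j hj hij =>
    Finset.disjoint_coe.mp (disjoint_of_disjoint_span_image hg.ne_zero (hG hi hj hij))
  calc ∑ i ∈ s, finrank R (span R (g '' G i))
      = ∑ i ∈ s, (G i).card :=
        Finset.sum_congr rfl fun i _ => finrank_span_image_eq_card (hg.linearIndepOn (s := G i))
    _ = (s.biUnion G).card := (Finset.card_biUnion hG').symm
    _ ≤ Fintype.card κ := Finset.card_le_univ _

end SpanOfSubfamilies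

theorem mbcr_storage_lt {n d r β : ℕ} (hr : 2 ≤ r) (hβ : 0 < β) (hn : d + r ≤ n) :
    d * (2 * β) + (r - 1) * β < (n - 1) * (2 * β) :=
  calc d * (2 * β) + (r - 1) * β
      < d * (2 * β) + (r - 1) * (2 * β) := by
        have : 0 < r - 1 := by lia
        gcongr
        lia
    _ = (d + (r - 1)) * (2 * β) := (add_mul _ _ _).symm
    _ ≤ (n - 1) * (2 * β) := by
        gcongr
        lia

theorem mbcr_no_repair_by_transfer_general {R V ι κ : Type*} [Semiring R] [Nontrivial R]
    [StrongRankCondition R] [AddCommMonoid V] [Module R V] [Fintype ι] [Fintype κ] {β : ℕ}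
    (hβ : Fintype.card κ < (Fintype.card ι - 1) * β) :
    ¬ ∃ (i₀ : ι) (W : ι → Submodule R V) (g : κ → V) (G : ι → Finset κ),
        LinearIndependent R g ∧
        span R (Set.range g) = W i₀ ∧
        (∀ i, i ≠ i₀ → span R (g '' G i) = W i₀ ⊓ W i ∧
          finrank R (W i₀ ⊓ W i : Submodule R V) = β) ∧
        (∀ i j, i ≠ i₀ → j ≠ i₀ → i ≠ j → (W i₀ ⊓ W i) ⊓ (W i₀ ⊓ W j) = ⊥) := by
  classical
  rintro ⟨i₀, W, g, G, hg, -, hG, hdisj⟩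
  have hspan_disjoint : (({i₀}ᶜ : Finset ι) : Set ι).PairwiseDisjoint
      fun i => span R (g '' G i) := by
    intro i hi j hj hij
    simp only [Finset.coe_compl, Finset.coe_singleton, Set.mem_compl_singleton_iff] at hi hj
    simpa only [Function.onFun, (hG i hi).1, (hG j hj).1, disjoint_iff] using hdisj i j hi hj hij
  have hfinrank : ∀ i ∈ ({i₀}ᶜ : Finset ι), finrank R (span R (g '' G i)) = β := by
    intro i hi
    obtain ⟨hspan, hdim⟩ := hG i (by simpa using hi)
    rw [hspan, hdim]
  have hle : (Fintype.card ι - 1) * β ≤ Fintype.card κ := by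
    simpa [Finset.sum_congr rfl hfinrank, Finset.card_compl] using
      sum_finrank_span_image_le_card hg hspan_disjoint
  exact hle.not_gt hβ

/-- Combinatorial core of the impossibility of repair-by-transfer for linear exact MBCR
codes (`r ≥ 2`, `d ≥ 2`): there is no node `i₀` (playing the role of node 1), no subspaces
`W i` of `𝔽_q^B`, no linearly independent family `g` of `α` vectors spanning `W i₀`, and no
subsets `G i` of those basis vectors such that for every `i ≠ i₀` the span of `G i` equals
`W i₀ ⊓ W i` with `dim (W i₀ ⊓ W i) = β₁`, while the subspaces `W i₀ ⊓ W i` (for distinct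
`i, j ≠ i₀`) pairwise intersect trivially. -/
theorem mbcr_no_repair_by_transfer {B : ℕ} (hB : 0 < B) {F : Type*} [Field F] [Fintype F]
    (n d r β₁ β₂ α : ℕ) (hr : 2 ≤ r) (hd : 2 ≤ d) (hβ₂ : 0 < β₂)
    (hn : d + r ≤ n) (hβ₁ : β₁ = 2 * β₂) (hα : α = d * β₁ + (r - 1) * β₂) :
    ¬ ∃ (i₀ : Fin n) (W : Fin n → Submodule F (Fin B → F)) (g : Fin α → (Fin B → F))
        (G : Fin n → Finset (Fin α)),
        LinearIndependent F g ∧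
        Submodule.span F (Set.range g) = W i₀ ∧
        (∀ i : Fin n, i ≠ i₀ →
          Submodule.span F (g '' ↑(G i)) = W i₀ ⊓ W i ∧
          finrank F (W i₀ ⊓ W i : Submodule F (Fin B → F)) = β₁) ∧
        (∀ i j : Fin n, i ≠ i₀ → j ≠ i₀ → i ≠ j →
          (W i₀ ⊓ W i) ⊓ (W i₀ ⊓ W j) = (⊥ : Submodule F (Fin B → F))) := by
  subst hβ₁ hα
  exact mbcr_no_repair_by_transfer_general (by simpa using mbcr_storage_lt hr hβ₂ hn)
end

section
/- Let P be a bivariate polynomial over F that is D-supported. Let x_1, …, x_k be k distinct elements of F and y_1, …, y_k be k distinct elements of F. If for every 1 ≤ l ≤ k the univariate polynomial P(x_l, Y) ∈ F[Y] is zero and the univariate polynomial P(X, y_l) ∈ F[X] is zero, then P = 0. (Consequently, any data-collector contacting k nodes of the constructed MBCR code — each node i storing the univariate polynomials F(x_i, Y) and F(X, y_i) — can reconstruct the encoded bivariate polynomial, since the code map is injective on these observations.) -/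
open Polynomial

/-- A bivariate polynomial `P ∈ F[X][Y]` (inner variable `X`, outer variable `Y`) is
`D`-supported if every monomial `X^i Y^j` occurring in `P` satisfies
`(i < k ∧ j < d + r) ∨ (i < d ∧ j < k)`. -/
def DSupported {F : Type*} [Field F] (k d r : ℕ) (P : Polynomial (Polynomial F)) : Prop :=
  ∀ i j : ℕ, (P.coeff j).coeff i ≠ 0 → (i < k ∧ j < d + r) ∨ (i < d ∧ j < k)

/-! Suppose no monomial of `P` is divisible by `X ^ m * Y ^ n`, and `P` vanishes on `m` vertical and
`n` horizontal lines. For `j ≥ n` the coefficient of `Y ^ j` has `X`-degree less than `m`, and the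
vertical lines give it `m` roots, so it is zero. Hence `P` has `Y`-degree less than `n`, while the
horizontal lines `Y = y l` supply the `n` roots `C (y l)` over the domain `R[X]`. -/

theorem DSupported.lt_or_lt {F : Type*} [Field F] {k d r i j : ℕ} {P : F[X][X]}
    (hP : DSupported k d r P) (hij : (P.coeff j).coeff i ≠ 0) : i < k ∨ j < k :=
  (hP i j hij).imp And.left And.right

theorem coeff_eq_zero_of_map_evalRingHom_eq_zero {R ι : Type*} [CommRing R] [IsDomain R]
    [Fintype ι] {P : R[X][X]} {x : ι → R} {j : ℕ} (hx : Function.Injective x)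
    (hdeg : (P.coeff j).degree < Fintype.card ι)
    (hXlines : ∀ l, P.map (evalRingHom (x l)) = 0) :
    P.coeff j = 0 := by
  refine eq_zero_of_degree_lt_of_eval_index_eq_zero Finset.univ hx.injOn hdeg fun l _ => ?_
  rw [← coe_evalRingHom, ← coeff_map, hXlines l, coeff_zero]

theorem mbcr_data_reconstruction_general {R ι κ : Type*} [CommRing R] [IsDomain R]
    [Fintype ι] [Fintype κ] {P : R[X][X]}
    (hP : ∀ i j, (P.coeff j).coeff i ≠ 0 → i < Fintype.card ι ∨ j < Fintype.card κ)
    {x : ι → R} {y : κ → R} (hx : Function.Injective x) (hy : Function.Injective y)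
    (hXlines : ∀ l, P.map (evalRingHom (x l)) = 0) (hYlines : ∀ l, P.eval (C (y l)) = 0) :
    P = 0 := by
  have hdegY : P.degree < Fintype.card κ := by
    refine (degree_lt_iff_coeff_zero _ _).2 fun j hj => ?_
    have hdegX : (P.coeff j).degree < Fintype.card ι :=
      (degree_lt_iff_coeff_zero _ _).2 fun i hi => by
        by_contra hne
        exact (hP i j hne).elim hi.not_gt hj.not_gt
    exact coeff_eq_zero_of_map_evalRingHom_eq_zero hx hdegX hXlines
  exact eq_zero_of_degree_lt_of_eval_index_eq_zero Finset.univ (C_injective.comp hy).injOn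
    hdegY fun l _ => hYlines l

/-- Data reconstruction for the MBCR code: a `D`-supported bivariate polynomial that
vanishes identically (as a univariate polynomial) on `k` lines `X = x l` and on `k` lines
`Y = y l`, for distinct `x l`'s and distinct `y l`'s, must be zero. -/
theorem mbcr_data_reconstruction {F : Type*} [Field F]
    (k d r : ℕ) (hk : 0 < k) (hd : 0 < d) (hr : 0 < r) (hkd : k ≤ d)
    (P : Polynomial (Polynomial F)) (hP : DSupported k d r P)
    (x y : Fin k → F) (hx : Function.Injective x) (hy : Function.Injective y)
    (hXlines : ∀ l : Fin k, P.map (Polynomial.evalRingHom (x l)) = 0)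
    (hYlines : ∀ l : Fin k, P.eval (Polynomial.C (y l)) = 0) :
    P = 0 := by
  refine mbcr_data_reconstruction_general (fun i j hij => ?_) hx hy hXlines hYlines
  simpa only [Fintype.card_fin] using hP.lt_or_lt hij
end

section
/- Let x_1, …, x_n be n distinct elements of F and y_1, …, y_n be n distinct elements of F, where n ≥ d + r. Let P and Q be D-supported bivariate polynomials over F. Let R ⊆ {1,…,n} with |R| = r, and for each i ∈ R let H_i ⊆ {1,…,n} \ R with |H_i| = d. If P(x_h, y_i) = Q(x_h, y_i) and P(x_i, y_h) = Q(x_i, y_h) for every i ∈ R and every h ∈ H_i, then for every i ∈ R the univariate polynomials agree: P(x_i, Y) = Q(x_i, Y) in F[Y] and P(X, y_i) = Q(X, y_i) in F[X]. (This is the exact cooperative regeneration property: each newcomer i ∈ R recovers its full stored content from β₁ = 2 field elements downloaded from each of its d helpers together with β₂ = 1 field element exchanged with each of the other r−1 newcomers.) -/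
open Polynomial

/-!
A `D`-supported polynomial has degree `< d` in `X` and `< d + r` in `Y`, and these two bounds
suffice. For a newcomer `i`, the `d` helper values at the `x h` determine the row `P(X, y i)`. The
rows of all newcomers then provide `P(x i, y j)` for the `r` indices `j ∈ R`; together with the `d`
helper values at the `y h` these are `d + r` values of the column `P(x i, Y)`, which determine it.
-/

section Degree

variable {A : Type*} [Semiring A]

theorem degree_eval_C_lt {P : A[X][X]} {d : ℕ} (hP : ∀ j, (P.coeff j).degree < d) (b : A) :
    (P.eval (C b)).degree < d := by
  rw [eval_eq_sum, sum_def, ← mem_degreeLT]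
  refine Submodule.sum_mem _ fun j _ => ?_
  rw [mem_degreeLT, degree_lt_iff_coeff_zero]
  intro m hm
  rw [← C_pow, coeff_mul_C, (degree_lt_iff_coeff_zero _ _).mp (hP j) m hm, zero_mul]

end Degree

namespace DSupported

variable {F : Type*} [Field F] {k d r : ℕ} {P : F[X][X]}

theorem degree_coeff_lt (hP : DSupported k d r P) (hkd : k ≤ d) (j : ℕ) :
    (P.coeff j).degree < d := by
  rw [degree_lt_iff_coeff_zero]
  intro i hi
  by_contra hne
  have := hP i j hne
  omega

theorem degree_lt (hP : DSupported k d r P) (hk : k ≤ d + r) : P.degree < (d + r : ℕ) := by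
  rw [degree_lt_iff_coeff_zero]
  intro j hj
  ext i
  by_contra hne
  have := hP i j hne
  omega

end DSupported

section Interpolation

variable {A ι : Type*} [CommRing A] [IsDomain A] {P Q : A[X][X]} {s : Finset ι}

theorem eval_C_eq_of_forall_evalEval_eq {x : ι → A} (hx : Set.InjOn x s)
    (hP : ∀ j, (P.coeff j).degree < s.card) (hQ : ∀ j, (Q.coeff j).degree < s.card) {b : A}
    (heval : ∀ h ∈ s, P.evalEval (x h) b = Q.evalEval (x h) b) :
    P.eval (C b) = Q.eval (C b) :=
  eq_of_degrees_lt_of_eval_index_eq s hx (degree_eval_C_lt hP b) (degree_eval_C_lt hQ b) heval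

theorem map_evalRingHom_eq_of_forall_evalEval_eq {y : ι → A} (hy : Set.InjOn y s)
    (hP : P.degree < s.card) (hQ : Q.degree < s.card) {a : A}
    (heval : ∀ h ∈ s, P.evalEval a (y h) = Q.evalEval a (y h)) :
    P.map (evalRingHom a) = Q.map (evalRingHom a) := by
  refine eq_of_degrees_lt_of_eval_index_eq s hy (degree_map_le.trans_lt hP)
    (degree_map_le.trans_lt hQ) fun h hh => ?_
  simpa only [map_evalRingHom_eval] using heval h hh

theorem mbcr_exact_regeneration_general {d : ℕ} {x y : ι → A}
    (hx : Function.Injective x) (hy : Function.Injective y) {R : Finset ι}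
    (hPX : ∀ j, (P.coeff j).degree < d) (hQX : ∀ j, (Q.coeff j).degree < d)
    (hPY : P.degree < (d + R.card : ℕ)) (hQY : Q.degree < (d + R.card : ℕ))
    {H : ι → Finset ι} (hHcard : ∀ i ∈ R, (H i).card = d) (hHdisj : ∀ i ∈ R, ∀ h ∈ H i, h ∉ R)
    (heval₁ : ∀ i ∈ R, ∀ h ∈ H i, P.evalEval (x h) (y i) = Q.evalEval (x h) (y i))
    (heval₂ : ∀ i ∈ R, ∀ h ∈ H i, P.evalEval (x i) (y h) = Q.evalEval (x i) (y h)) :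
    ∀ i ∈ R,
      P.map (evalRingHom (x i)) = Q.map (evalRingHom (x i)) ∧
      P.eval (C (y i)) = Q.eval (C (y i)) := by
  have row_eq : ∀ i ∈ R, P.eval (C (y i)) = Q.eval (C (y i)) := fun i hi => by
    rw [← hHcard i hi] at hPX hQX
    exact eval_C_eq_of_forall_evalEval_eq hx.injOn hPX hQX (heval₁ i hi)
  intro i hi
  refine ⟨?_, row_eq i hi⟩
  have hcard : ((H i).disjUnion R (Finset.disjoint_left.mpr (hHdisj i hi))).card = d + R.card := by
    rw [Finset.card_disjUnion, hHcard i hi]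
  rw [← hcard] at hPY hQY
  refine map_evalRingHom_eq_of_forall_evalEval_eq hy.injOn hPY hQY fun j hj => ?_
  rcases Finset.mem_disjUnion.mp hj with hjH | hjR
  · exact heval₂ i hi j hjH
  · exact congrArg (eval (x i)) (row_eq j hjR)

end Interpolation

/-- Exact cooperative regeneration for the MBCR code: if two `D`-supported bivariate
polynomials `P, Q` agree at the points `(x h, y i)` and `(x i, y h)` for every failed node
`i ∈ R` and every helper `h ∈ H i`, then for each `i ∈ R` the stored univariate
polynomials agree: `P(x i, Y) = Q(x i, Y)` and `P(X, y i) = Q(X, y i)`. -/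
theorem mbcr_exact_regeneration {F : Type*} [Field F]
    (k d r n : ℕ) (hk : 0 < k) (hd : 0 < d) (hr : 0 < r) (hkd : k ≤ d) (hn : d + r ≤ n)
    (x y : Fin n → F) (hx : Function.Injective x) (hy : Function.Injective y)
    (P Q : Polynomial (Polynomial F)) (hP : DSupported k d r P) (hQ : DSupported k d r Q)
    (R : Finset (Fin n)) (hRcard : R.card = r)
    (H : Fin n → Finset (Fin n))
    (hHcard : ∀ i ∈ R, (H i).card = d)
    (hHdisj : ∀ i ∈ R, ∀ h ∈ H i, h ∉ R)
    (heval₁ : ∀ i ∈ R, ∀ h ∈ H i,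
      (P.eval (Polynomial.C (y i))).eval (x h) = (Q.eval (Polynomial.C (y i))).eval (x h))
    (heval₂ : ∀ i ∈ R, ∀ h ∈ H i,
      (P.eval (Polynomial.C (y h))).eval (x i) = (Q.eval (Polynomial.C (y h))).eval (x i)) :
    ∀ i ∈ R,
      P.map (Polynomial.evalRingHom (x i)) = Q.map (Polynomial.evalRingHom (x i)) ∧
      P.eval (Polynomial.C (y i)) = Q.eval (Polynomial.C (y i)) := by
  subst hRcard
  exact mbcr_exact_regeneration_general hx hy (hP.degree_coeff_lt hkd) (hQ.degree_coeff_lt hkd)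
    (hP.degree_lt (by omega)) (hQ.degree_lt (by omega)) hHcard hHdisj heval₁ heval₂
end

section
/- Let x₀ and y₀ be elements of F, let f ∈ F[Y] be a univariate polynomial of degree < d + r and g ∈ F[X] a univariate polynomial of degree < d such that f(y₀) = g(x₀). Then there exists a D-supported bivariate polynomial P ∈ F[X,Y] with P(x₀, Y) = f(Y) and P(X, y₀) = g(X). (Consequently, in the constructed MBCR code the subspace stored by each node has dimension exactly α = 2d + r − 1, since a node's content is precisely such a pair (f, g) subject only to the consistency condition f(y₀) = g(x₀).) -/
open Polynomial

/-! The polynomial `P = g(X) + (f(Y) - f(y₀))` works: its monomials all lie on the two coordinate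
axes, and consistency turns `P(x₀, Y) = g(x₀) + f(Y) - f(y₀)` into `f(Y)`. -/

/-- `P ∈ R[X][Y]` is supported in the hook of thickness `k` with `Y`-arm of length `m` and `X`-arm
of length `n`. This is the region `D(k, d, r)` for `m = d + r` and `n = d`, with the arm lengths
decoupled and coefficients in any semiring; the inner variable is `X`, as in `DSupported`. -/
def HookSupported {R : Type*} [Semiring R] (k m n : ℕ) (P : R[X][X]) : Prop :=
  ∀ i j : ℕ, (P.coeff j).coeff i ≠ 0 → (i < k ∧ j < m) ∨ (i < n ∧ j < k)

section Semiring

variable {R : Type*} [Semiring R] {k m n : ℕ}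

theorem HookSupported.add {P Q : R[X][X]} (hP : HookSupported k m n P)
    (hQ : HookSupported k m n Q) : HookSupported k m n (P + Q) := by
  intro i j hij
  rw [coeff_add, coeff_add] at hij
  by_cases hPij : (P.coeff j).coeff i = 0
  · exact hQ i j (by rwa [hPij, zero_add] at hij)
  · exact hP i j hPij

theorem hookSupported_C (hk : 0 < k) {g : R[X]} (hg : g.degree < n) :
    HookSupported k m n (C g) := by
  intro i j hij
  obtain rfl : j = 0 := by
    by_contra hj
    exact hij (by rw [coeff_C_of_ne_zero hj, coeff_zero])
  rw [coeff_C_zero] at hij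
  exact .inr ⟨by exact_mod_cast (le_degree_of_ne_zero hij).trans_lt hg, hk⟩

theorem hookSupported_map_C (hk : 0 < k) {f : R[X]} (hf : f.degree < m) :
    HookSupported k m n (f.map C) := by
  intro i j hij
  rw [coeff_map] at hij
  obtain rfl : i = 0 := by
    by_contra hi
    exact hij (coeff_C_of_ne_zero hi)
  rw [coeff_C_zero] at hij
  exact .inl ⟨hk, by exact_mod_cast (le_degree_of_ne_zero hij).trans_lt hf⟩

end Semiring

theorem degree_sub_C_eval_le {R : Type*} [Ring R] (f : R[X]) (y : R) :
    (f - C (f.eval y)).degree ≤ f.degree := by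
  rcases eq_or_ne f 0 with rfl | hf
  · rw [eval_zero, C_0, sub_zero]
  · have hconst : (C (f.eval y)).degree ≤ f.degree :=
      degree_C_le.trans (zero_le_degree_iff.2 hf)
    exact (degree_sub_le f _).trans (max_le le_rfl hconst)

theorem map_evalRingHom_map_C {R : Type*} [CommSemiring R] (x : R) (f : R[X]) :
    (f.map C).map (evalRingHom x) = f := by
  have hcomp : (evalRingHom x).comp C = RingHom.id R := by
    ext a : 1
    exact eval_C
  rw [Polynomial.map_map, hcomp, Polynomial.map_id]

theorem mbcr_node_content_realizable_general {R : Type*} [CommRing R] {k m n : ℕ} (hk : 0 < k)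
    {x₀ y₀ : R} {f g : R[X]} (hf : f.degree < m) (hg : g.degree < n)
    (hfg : f.eval y₀ = g.eval x₀) :
    ∃ P : R[X][X], HookSupported k m n P ∧ P.map (evalRingHom x₀) = f ∧ P.eval (C y₀) = g := by
  refine ⟨C g + (f - C (f.eval y₀)).map C, ?supported, ?row, ?column⟩
  case supported =>
    exact (hookSupported_C hk hg).add
      (hookSupported_map_C hk ((degree_sub_C_eval_le f y₀).trans_lt hf))
  case row =>
    rw [Polynomial.map_add, map_C, map_evalRingHom_map_C, coe_evalRingHom, hfg,
      add_sub_cancel]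
  case column =>
    rw [eval_add, eval_C, eval_map_apply, eval_sub, eval_C, sub_self, C_0, add_zero]

/-- Node contents are exactly the consistent pairs of univariate polynomials: for any
`x₀, y₀ ∈ F`, any `f ∈ F[Y]` of degree `< d + r` and any `g ∈ F[X]` of degree `< d` with
`f(y₀) = g(x₀)`, there is a `D`-supported bivariate polynomial `P` with `P(x₀, Y) = f`
and `P(X, y₀) = g`. -/
theorem mbcr_node_content_realizable {F : Type*} [Field F]
    (k d r : ℕ) (hk : 0 < k) (hd : 0 < d) (hr : 0 < r) (hkd : k ≤ d)
    (x₀ y₀ : F) (f g : Polynomial F)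
    (hf : f.degree < ((d + r : ℕ) : WithBot ℕ))
    (hg : g.degree < ((d : ℕ) : WithBot ℕ))
    (hfg : f.eval y₀ = g.eval x₀) :
    ∃ P : Polynomial (Polynomial F), DSupported k d r P ∧
      P.map (Polynomial.evalRingHom x₀) = f ∧
      P.eval (Polynomial.C y₀) = g :=
  mbcr_node_content_realizable_general hk hf hg hfg
end
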